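/- arXiv:2105.09534 — 3 statements merged into one kernel-verified Lean document; each statement's English description precedes it below -/
import Mathlib

section
/- Let S be a finite set of convex subsets of ℝ with |S| = n ≥ 1. Then the set CL(S) = {⋂ T : ∅ ≠ T ⊆ S} of intersections of nonempty subfamilies of S has cardinality at most n². -/
/-- For a finite set `S` of intervals (convex subsets) of `ℝ` with `|S| = n ≥ 1`, the
intersection-closure `CL(S) = {⋂ T : ∅ ≠ T ⊆ S}` has at most `n²` elements. -/
theorem closure_card_le_sq (S : Finset (Set ℝ)) (hS : S.Nonempty)
    (hconv : ∀ I ∈ S, Convex ℝ I) :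
    {A : Set ℝ | ∃ T : Finset (Set ℝ), T ⊆ S ∧ T.Nonempty ∧ A = ⋂₀ ↑T}.ncard
      ≤ S.card ^ 2 := by
  classical
  have key : {A : Set ℝ | ∃ T : Finset (Set ℝ), T ⊆ S ∧ T.Nonempty ∧ A = ⋂₀ ↑T} ⊆
      (((S ×ˢ S).image (fun p : Set ℝ × Set ℝ => p.1 ∩ p.2) : Finset (Set ℝ)) :
        Set (Set ℝ)) := by
    rintro A ⟨T, hTS, hT, rfl⟩
    obtain ⟨I, hI, hImax⟩ := T.exists_max_image (fun I => upperClosure I) hT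
    obtain ⟨J, hJ, hJmin⟩ := T.exists_min_image (fun I => lowerClosure I) hT
    rw [Finset.mem_coe, Finset.mem_image]
    refine ⟨(I, J), Finset.mem_product.2 ⟨hTS hI, hTS hJ⟩, ?_⟩
    apply Set.Subset.antisymm
    · rintro x ⟨hxI, hxJ⟩ K hK
      have hKc : Set.OrdConnected K := (hconv K (hTS hK)).ordConnected
      have h1 : x ∈ upperClosure K := hImax K hK (subset_upperClosure hxI)
      have h2 : x ∈ lowerClosure K := hJmin K hK (subset_lowerClosure hxJ)
      obtain ⟨a, ha, hax⟩ := mem_upperClosure.1 h1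
      obtain ⟨b, hb, hxb⟩ := mem_lowerClosure.1 h2
      exact hKc.out ha hb ⟨hax, hxb⟩
    · intro x hx
      exact ⟨hx I hI, hx J hJ⟩
  calc _ ≤ _ := Set.ncard_le_ncard key (Finset.finite_toSet _)
    _ ≤ (S ×ˢ S).card := by
      rw [Set.ncard_coe_finset]; exact Finset.card_image_le
    _ = S.card ^ 2 := by rw [Finset.card_product, sq]
end

section
/- Let S be a finite set of nonempty intervals of ℝ with endpoints in ℤ ∪ {−∞, ∞} that is non-adjacent, i.e. for all (not necessarily distinct) I₁, I₂ ∈ S, sup(I₁) = inf(I₂) (as extended reals) implies sup(I₁) = 0. Then the set of all nonempty intersections {⋂ T : ∅ ≠ T ⊆ S, ⋂ T ≠ ∅} is also non-adjacent: for any two such nonempty intersections J₁, J₂, sup(J₁) = inf(J₂) implies sup(J₁) = 0. -/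
/-- Supremum of a set of reals, taken in the extended reals. -/
noncomputable def eSup (I : Set ℝ) : EReal := sSup (Real.toEReal '' I)

/-- Infimum of a set of reals, taken in the extended reals. -/
noncomputable def eInf (I : Set ℝ) : EReal := sInf (Real.toEReal '' I)

theorem exists_eSup_eq (T : Set (Set ℝ)) (hfin : T.Finite) (hT : T.Nonempty)
    (hconv : ∀ I ∈ T, Convex ℝ I) (hne : (⋂₀ T).Nonempty) :
    ∃ I ∈ T, eSup (⋂₀ T) = eSup I := by
  obtain ⟨x, hx⟩ := hne
  obtain ⟨I, hI, hmin⟩ := Set.exists_min_image T eSup hfin hT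
  refine ⟨I, hI, le_antisymm (sSup_le_sSup (Set.image_mono (Set.sInter_subset_of_mem hI))) ?_⟩
  by_contra hlt
  rw [not_le] at hlt
  obtain ⟨y, hy1, hy2⟩ := EReal.lt_iff_exists_real_btwn.1 hlt
  have hxy : (x : EReal) ≤ eSup (⋂₀ T) := le_sSup ⟨x, hx, rfl⟩
  have hxy' : x ≤ y := EReal.coe_le_coe_iff.1 (hxy.trans hy1.le)
  have hyT : y ∈ ⋂₀ T := by
    intro K hK
    obtain ⟨_, ⟨z, hz, rfl⟩, hyz⟩ := lt_sSup_iff.1 (lt_of_lt_of_le hy2 (hmin K hK))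
    exact (hconv K hK).ordConnected.out (hx K hK) hz ⟨hxy', (EReal.coe_lt_coe_iff.1 hyz).le⟩
  exact absurd (le_sSup ⟨y, hyT, rfl⟩ : (y : EReal) ≤ eSup (⋂₀ T)) (not_le.2 hy1)

theorem exists_eInf_eq (T : Set (Set ℝ)) (hfin : T.Finite) (hT : T.Nonempty)
    (hconv : ∀ I ∈ T, Convex ℝ I) (hne : (⋂₀ T).Nonempty) :
    ∃ I ∈ T, eInf (⋂₀ T) = eInf I := by
  obtain ⟨x, hx⟩ := hne
  obtain ⟨I, hI, hmax⟩ := Set.exists_max_image T eInf hfin hT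
  refine ⟨I, hI, le_antisymm ?_ (sInf_le_sInf (Set.image_mono (Set.sInter_subset_of_mem hI)))⟩
  by_contra hlt
  rw [not_le] at hlt
  obtain ⟨y, hy1, hy2⟩ := EReal.lt_iff_exists_real_btwn.1 hlt
  have hxy : eInf (⋂₀ T) ≤ (x : EReal) := sInf_le ⟨x, hx, rfl⟩
  have hxy' : y ≤ x := EReal.coe_le_coe_iff.1 (hy2.le.trans hxy)
  have hyT : y ∈ ⋂₀ T := by
    intro K hK
    obtain ⟨_, ⟨z, hz, rfl⟩, hyz⟩ := sInf_lt_iff.1 (lt_of_le_of_lt (hmax K hK) hy1)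
    exact (hconv K hK).ordConnected.out hz (hx K hK) ⟨(EReal.coe_lt_coe_iff.1 hyz).le, hxy'⟩
  exact absurd (sInf_le ⟨y, hyT, rfl⟩ : eInf (⋂₀ T) ≤ (y : EReal)) (not_le.2 hy2)

/-- If `S` is a finite, non-adjacent set of nonempty intervals of `ℝ` with endpoints
in `ℤ ∪ {−∞, ∞}`, then the set of nonempty intersections of nonempty subfamilies of
`S` is again non-adjacent: for any two such intersections `J₁, J₂`,
`sup J₁ = inf J₂` implies `sup J₁ = 0`. -/
theorem closure_nonadjacent (S : Set (Set ℝ)) (hfin : S.Finite)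
    (hne : ∀ I ∈ S, I.Nonempty) (hconv : ∀ I ∈ S, Convex ℝ I)
    (hsup : ∀ I ∈ S, (∃ n : ℤ, eSup I = ((n : ℝ) : EReal)) ∨ eSup I = ⊤)
    (hinf : ∀ I ∈ S, (∃ n : ℤ, eInf I = ((n : ℝ) : EReal)) ∨ eInf I = ⊥)
    (hna : ∀ I₁ ∈ S, ∀ I₂ ∈ S, eSup I₁ = eInf I₂ → eSup I₁ = 0) :
    ∀ J₁ ∈ {J : Set ℝ | ∃ T : Set (Set ℝ), T ⊆ S ∧ T.Nonempty ∧ J = ⋂₀ T ∧ J.Nonempty},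
    ∀ J₂ ∈ {J : Set ℝ | ∃ T : Set (Set ℝ), T ⊆ S ∧ T.Nonempty ∧ J = ⋂₀ T ∧ J.Nonempty},
      eSup J₁ = eInf J₂ → eSup J₁ = 0 := by
  rintro _ ⟨T₁, h₁, n₁, rfl, m₁⟩ _ ⟨T₂, h₂, n₂, rfl, m₂⟩ h
  obtain ⟨I₁, hI₁, e₁⟩ := exists_eSup_eq T₁ (hfin.subset h₁) n₁ (fun I hI => hconv I (h₁ hI)) m₁
  obtain ⟨I₂, hI₂, e₂⟩ := exists_eInf_eq T₂ (hfin.subset h₂) n₂ (fun I hI => hconv I (h₂ hI)) m₂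
  rw [e₁, e₂] at h
  rw [e₁]
  exact hna I₁ (h₁ hI₁) I₂ (h₂ hI₂) h
end

section
/- Let γ be a 1-TPTL formula over Σ in negation normal form containing no freeze quantifier, with clock constraints over intervals from I_ν. For every I_ν-interval word κ over Σ and every position j of κ: if κ,j ⊨ LTL(γ), then for every pointed timed word (ρ,i) consistent with κ, ρ,j,τ_i ⊨ γ (i.e. γ holds at position j of ρ under the valuation that freezes x to τ_i). -/
/-- A timed word over `σ`. -/
structure TWord (σ : Type) where
  len : ℕ
  pos : 0 < len
  label : ℕ → Set σ
  time : ℕ → ℝ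
  label_ne : ∀ j < len, (label j).Nonempty
  time_zero : time 0 = 0
  time_mono : ∀ j k : ℕ, j ≤ k → k < len → time j ≤ time k

/-- 1-TPTL formulas in negation normal form over propositions `σ`, with a single
clock `x`: freeze quantification `x.φ` and clock constraints `T − x ∈ I`. -/
inductive TPTL (σ : Type) : Type where
  | atom (a : σ)
  | natom (a : σ)
  | tt
  | ff
  | freeze (φ : TPTL σ)
  | constraintT (I : Set ℝ)
  | and (φ ψ : TPTL σ)
  | or (φ ψ : TPTL σ)
  | untl (φ ψ : TPTL σ)
  | snce (φ ψ : TPTL σ)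
  | alw (φ : TPTL σ)
  | hist (φ : TPTL σ)

/-- `φ` contains no freeze quantifier. -/
def TPTL.FreezeFree {σ : Type} : TPTL σ → Prop
  | .freeze _ => False
  | .and φ ψ => φ.FreezeFree ∧ ψ.FreezeFree
  | .or φ ψ => φ.FreezeFree ∧ ψ.FreezeFree
  | .untl φ ψ => φ.FreezeFree ∧ ψ.FreezeFree
  | .snce φ ψ => φ.FreezeFree ∧ ψ.FreezeFree
  | .alw φ => φ.FreezeFree
  | .hist φ => φ.FreezeFree
  | _ => True

/-- The set of intervals appearing in clock constraints of `φ`. -/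
def TPTL.ivals {σ : Type} : TPTL σ → Set (Set ℝ)
  | .constraintT I => {I}
  | .freeze φ => φ.ivals
  | .and φ ψ => φ.ivals ∪ ψ.ivals
  | .or φ ψ => φ.ivals ∪ ψ.ivals
  | .untl φ ψ => φ.ivals ∪ ψ.ivals
  | .snce φ ψ => φ.ivals ∪ ψ.ivals
  | .alw φ => φ.ivals
  | .hist φ => φ.ivals
  | _ => ∅

/-- TPTL satisfaction `ρ, i, v ⊨ φ` (strict U/S, valuation `v` of the clock `x`). -/
def tsat {σ : Type} (ρ : TWord σ) : TPTL σ → ℕ → ℝ → Prop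
  | .atom a, i, _ => a ∈ ρ.label i
  | .natom a, i, _ => a ∉ ρ.label i
  | .tt, _, _ => True
  | .ff, _, _ => False
  | .freeze φ, i, _ => tsat ρ φ i (ρ.time i)
  | .constraintT I, i, v => ρ.time i - v ∈ I
  | .and φ ψ, i, v => tsat ρ φ i v ∧ tsat ρ ψ i v
  | .or φ ψ, i, v => tsat ρ φ i v ∨ tsat ρ ψ i v
  | .untl φ ψ, i, v =>
      ∃ j, i < j ∧ j < ρ.len ∧ tsat ρ ψ j v ∧ ∀ k, i < k → k < j → tsat ρ φ k v
  | .snce φ ψ, i, v =>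
      ∃ j, j < i ∧ tsat ρ ψ j v ∧ ∀ k, j < k → k < i → tsat ρ φ k v
  | .alw φ, i, v => ∀ j, i < j → j < ρ.len → tsat ρ φ j v
  | .hist φ, i, v => ∀ j, j < i → tsat ρ φ j v

/-- Atomic propositions of interval words: a proposition from `σ`, an interval, or
the anchor marker `anch`. -/
abbrev TAtom (σ : Type) : Type := σ ⊕ (Set ℝ ⊕ Unit)

def prAt {σ : Type} (a : σ) : TAtom σ := Sum.inl a
def ivAt {σ : Type} (I : Set ℝ) : TAtom σ := Sum.inr (Sum.inl I)
def anchAt {σ : Type} : TAtom σ := Sum.inr (Sum.inr ())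

/-- A finite nonempty word over the alphabet `2^P`. -/
structure PWord (P : Type) where
  len : ℕ
  pos : 0 < len
  label : ℕ → Set P

/-- LTL formulas over atomic propositions `P`, with strict until and since. -/
inductive LTL (P : Type) : Type where
  | atom (p : P)
  | tt
  | neg (φ : LTL P)
  | and (φ ψ : LTL P)
  | or (φ ψ : LTL P)
  | untl (φ ψ : LTL P)
  | snce (φ ψ : LTL P)

/-- LTL satisfaction `w, j ⊨ φ` on finite words. -/
def lsat {P : Type} (w : PWord P) : LTL P → ℕ → Prop
  | .atom p, j => p ∈ w.label j
  | .tt, _ => True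
  | .neg φ, j => ¬ lsat w φ j
  | .and φ ψ, j => lsat w φ j ∧ lsat w ψ j
  | .or φ ψ, j => lsat w φ j ∨ lsat w ψ j
  | .untl φ ψ, j =>
      ∃ k, j < k ∧ k < w.len ∧ lsat w ψ k ∧ ∀ m, j < m → m < k → lsat w φ m
  | .snce φ ψ, j =>
      ∃ k, k < j ∧ lsat w ψ k ∧ ∀ m, k < m → m < j → lsat w φ m

/-- Strict eventually. -/
def LTL.F {P : Type} (φ : LTL P) : LTL P := .untl .tt φ
/-- Strict once (past). -/
def LTL.Pst {P : Type} (φ : LTL P) : LTL P := .snce .tt φ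
/-- Weak (non-strict) eventually. -/
def LTL.Fw {P : Type} (φ : LTL P) : LTL P := .or φ φ.F
/-- Strict globally. -/
def LTL.G {P : Type} (φ : LTL P) : LTL P := .neg φ.neg.F
/-- Weak (non-strict) globally. -/
def LTL.Gw {P : Type} (φ : LTL P) : LTL P := .neg φ.neg.Fw
/-- Strict historically. -/
def LTL.H {P : Type} (φ : LTL P) : LTL P := .neg φ.neg.Pst

/-- `LTL(φ)`: the LTL formula obtained from a (freeze-free) TPTL formula by replacing
each clock constraint `T − x ∈ I` by the atomic proposition `I`. -/
def toLTL {σ : Type} : TPTL σ → LTL (TAtom σ)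
  | .atom a => .atom (prAt a)
  | .natom a => .neg (.atom (prAt a))
  | .tt => .tt
  | .ff => .neg .tt
  | .freeze _ => .tt
  | .constraintT I => .atom (ivAt I)
  | .and φ ψ => .and (toLTL φ) (toLTL ψ)
  | .or φ ψ => .or (toLTL φ) (toLTL ψ)
  | .untl φ ψ => .untl (toLTL φ) (toLTL ψ)
  | .snce φ ψ => .snce (toLTL φ) (toLTL ψ)
  | .alw φ => (toLTL φ).G
  | .hist φ => (toLTL φ).H

/-- `w` is an `Iν`-interval word: it has a unique anchor position, the anchor's label
contains no interval, and all intervals in labels come from `Iν`. -/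
def IsIW {σ : Type} (Iν : Set (Set ℝ)) (w : PWord (TAtom σ)) : Prop :=
  (∃ i, i < w.len ∧ anchAt ∈ w.label i ∧ ∀ j < w.len, anchAt ∈ w.label j → j = i) ∧
  (∀ j < w.len, anchAt ∈ w.label j → ∀ I : Set ℝ, ivAt I ∉ w.label j) ∧
  (∀ j < w.len, ∀ I : Set ℝ, ivAt I ∈ w.label j → I ∈ Iν)

/-- The pointed timed word `(ρ, i)` is consistent with the interval word `w`:
same length, `i` is the (unique) anchor of `w`, same propositions at every position,
and every interval at a position `j ≠ i` contains `τ_j − τ_i`. -/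
def ConsistentW {σ : Type} (ρ : TWord σ) (i : ℕ) (w : PWord (TAtom σ)) : Prop :=
  ρ.len = w.len ∧ i < w.len ∧ anchAt ∈ w.label i ∧
  (∀ j < w.len, anchAt ∈ w.label j → j = i) ∧
  (∀ j < w.len, ρ.label j = {a | prAt a ∈ w.label j}) ∧
  (∀ j < w.len, j ≠ i → ∀ I : Set ℝ, ivAt I ∈ w.label j → ρ.time j - ρ.time i ∈ I)

/-- Lemma 9(i) of the paper: if `κ, j ⊨ LTL(γ)` for a freeze-free
1-TPTL formula `γ`, then for every pointed timed word `(ρ, i)` consistent with `κ`,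
`γ` holds at position `j` of `ρ` under the valuation freezing `x` to `τ_i`. -/
theorem ltl_sat_implies_tptl {σ : Type} (Iν : Set (Set ℝ))
    (γ : TPTL σ) (hff : γ.FreezeFree) (hiv : γ.ivals ⊆ Iν)
    (κ : PWord (TAtom σ)) (hκ : IsIW Iν κ) (j : ℕ) (hj : j < κ.len)
    (hsat : lsat κ (toLTL γ) j) :
    ∀ (ρ : TWord σ) (i : ℕ), ConsistentW ρ i κ → tsat ρ γ j (ρ.time i) := by
  intro ρ i hc
  obtain ⟨hlen, hi, hanch, huniq, hlab, htime⟩ := hc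
  obtain ⟨-, hno, -⟩ := hκ
  clear hiv
  induction γ generalizing j with
  | atom a =>
    simp only [tsat, hlab j hj]
    exact hsat
  | natom a =>
    simp only [tsat, hlab j hj]
    exact hsat
  | tt => trivial
  | ff => exact hsat trivial
  | freeze φ ih => exact hff.elim
  | constraintT I =>
    have hne : j ≠ i := by
      rintro rfl
      exact hno j hj hanch I hsat
    exact htime j hj hne I hsat
  | and φ ψ ih1 ih2 =>
    exact ⟨ih1 hff.1 j hj hsat.1, ih2 hff.2 j hj hsat.2⟩
  | or φ ψ ih1 ih2 =>
    exact hsat.imp (ih1 hff.1 j hj) (ih2 hff.2 j hj)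
  | untl φ ψ ih1 ih2 =>
    obtain ⟨k, hjk, hk, h2, h1⟩ := hsat
    exact ⟨k, hjk, hlen ▸ hk, ih2 hff.2 k hk h2,
      fun m hm hmk => ih1 hff.1 m (hmk.trans hk) (h1 m hm hmk)⟩
  | snce φ ψ ih1 ih2 =>
    obtain ⟨k, hkj, h2, h1⟩ := hsat
    exact ⟨k, hkj, ih2 hff.2 k (hkj.trans hj) h2,
      fun m hm hmj => ih1 hff.1 m (hmj.trans hj) (h1 m hm hmj)⟩
  | alw φ ih =>
    intro k hjk hk
    have hk' : k < κ.len := hlen ▸ hk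
    refine ih hff k hk' ?_
    by_contra hn
    exact hsat ⟨k, hjk, hk', hn, fun _ _ _ => trivial⟩
  | hist φ ih =>
    intro k hkj
    refine ih hff k (hkj.trans hj) ?_
    by_contra hn
    exact hsat ⟨k, hkj, hn, fun _ _ _ => trivial⟩
end
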